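/- Let S = k[x_1,…,x_n] be a polynomial ring over a field k, let q ≥ 1, let α_1,…,α_n be positive integers, and let l_1,…,l_q be monomials each divisible by x_n. Suppose M is the monomial ideal whose minimal monomial generating set is exactly G = {x_1^{α_1},…,x_n^{α_n}, l_1,…,l_q}. Then β_n(S/M) ≥ 2. -/

import Mathlib

open CategoryTheory MvPolynomial

/-- The monomial in `k[x_1,…,x_n]` with exponent vector `a : Fin n → ℕ`. -/
noncomputable def expMon (k : Type) [Field k] {n : ℕ} (a : Fin n → ℕ) :
    MvPolynomial (Fin n) k :=
  monomial (Finsupp.equivFunOnFinite.symm a) 1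

/-- The monomial ideal generated by the monomials with exponent vectors in `A`. -/
noncomputable def monIdeal (k : Type) [Field k] {n : ℕ} (A : Set (Fin n → ℕ)) :
    Ideal (MvPolynomial (Fin n) k) :=
  Ideal.span (expMon k '' A)

/-- The projective dimension of a module, as a value in `ℕ∞`: the least `d` such that there is
a projective resolution vanishing in homological degrees `> d`. -/
noncomputable def projDim (R : Type) [Ring R] (N : ModuleCat R) : ℕ∞ :=
  sInf {d : ℕ∞ | ∃ P : ProjectiveResolution N,
    ∀ i : ℕ, d < (i : ℕ∞) → Limits.IsZero (P.complex.X i)}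

/-- `pd(S/M)`, the projective dimension of `S/M` as an `S`-module. -/
noncomputable def pdQuot (k : Type) [Field k] {n : ℕ} (M : Ideal (MvPolynomial (Fin n) k)) : ℕ∞ :=
  projDim (MvPolynomial (Fin n) k)
    (ModuleCat.of (MvPolynomial (Fin n) k) (MvPolynomial (Fin n) k ⧸ M))

/-- The `i`-th Betti number of `S/M`, i.e. `dim_k Tor_i^S(S/M, k)`, where the residue field
`k = S/(x_1,…,x_n)` and the `k`-vector space structure on `Tor` comes from the base field. -/
noncomputable def betti (k : Type) [Field k] {n : ℕ} (M : Ideal (MvPolynomial (Fin n) k))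
    (i : ℕ) : ℕ :=
  Module.finrank k
    ((ModuleCat.restrictScalars (algebraMap k (MvPolynomial (Fin n) k))).obj
      (((Tor (ModuleCat (MvPolynomial (Fin n) k)) i).obj
          (ModuleCat.of _ (MvPolynomial (Fin n) k ⧸ M))).obj
        (ModuleCat.of _ (MvPolynomial (Fin n) k ⧸
          Ideal.span (Set.range (X : Fin n → MvPolynomial (Fin n) k))))))

/-- A finite free-like resolution of `R ⧸ I` with differentials landing in `J • ⊤` and with top
term isomorphic to `R` in degree `i`. -/
structure KRes (R : Type) [CommRing R] (J I : Ideal R) (i : ℕ) where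
  C : ℕ → ModuleCat.{0} R
  d : ∀ j, C (j + 1) →ₗ[R] C j
  proj : ∀ j, Module.Projective R (C j)
  dd : ∀ j x, d j (d (j + 1) x) = 0
  ex : ∀ j x, d j x = 0 → ∃ y, d (j + 1) y = x
  ε : C 0 →ₗ[R] R
  εsurj : Function.Surjective ε
  ex0 : ∀ x, ε x ∈ I ↔ ∃ y, d 0 y = x
  van : ∀ j, i < j → Subsingleton (C j)
  top : C i ≃ₗ[R] R
  minim : ∀ j x, d j x ∈ J • (⊤ : Submodule R (C j))

/-- The base case. -/
noncomputable def KRes.base (R : Type) [CommRing R] (J : Ideal R) : KRes R J ⊥ 0 where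
  C := fun j => match j with
    | 0 => ModuleCat.of R R
    | _ + 1 => ModuleCat.of R PUnit
  d := fun j => 0
  proj := fun j => match j with
    | 0 => inferInstanceAs (Module.Projective R R)
    | _ + 1 => inferInstanceAs (Module.Projective R PUnit)
  dd := fun _ _ => rfl
  ex := fun _ _ _ => ⟨0, Subsingleton.elim (α := PUnit) _ _⟩
  ε := LinearMap.id
  εsurj := fun x => ⟨x, rfl⟩
  ex0 := fun x => by
    constructor
    · intro h; exact ⟨0, ((Submodule.mem_bot R).1 h).symm⟩
    · rintro ⟨y, rfl⟩; exact Submodule.zero_mem _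
  van := fun j hj => match j, hj with
    | _ + 1, _ => inferInstanceAs (Subsingleton PUnit)
  top := LinearEquiv.refl R R
  minim := fun _ _ => Submodule.zero_mem _

lemma KRes.smulTop_prod {R : Type} [CommRing R] (J : Ideal R) {M N : Type} [AddCommGroup M]
    [AddCommGroup N] [Module R M] [Module R N] {a : M} {b : N}
    (ha : a ∈ J • (⊤ : Submodule R M)) (hb : b ∈ J • (⊤ : Submodule R N)) :
    (a, b) ∈ J • (⊤ : Submodule R (M × N)) := by
  have h1 : LinearMap.inl R M N a ∈ J • (⊤ : Submodule R (M × N)) :=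
    Submodule.smul_mono (le_refl J) (le_top (a := Submodule.map (LinearMap.inl R M N) ⊤))
      (by rw [← Submodule.map_smul'']; exact Submodule.mem_map_of_mem ha)
  have h2 : LinearMap.inr R M N b ∈ J • (⊤ : Submodule R (M × N)) :=
    Submodule.smul_mono (le_refl J) (le_top (a := Submodule.map (LinearMap.inr R M N) ⊤))
      (by rw [← Submodule.map_smul'']; exact Submodule.mem_map_of_mem hb)
  simpa using Submodule.add_mem _ h1 h2

/-- The terms of the cone. -/
def coneC {R : Type} [CommRing R] (C : ℕ → ModuleCat.{0} R) : ℕ → ModuleCat.{0} R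
  | 0 => C 0
  | j + 1 => ModuleCat.of R (C (j + 1) × C j)

/-- The differentials of the cone. -/
noncomputable def coneD {R : Type} [CommRing R] (C : ℕ → ModuleCat.{0} R)
    (d : ∀ j, C (j + 1) →ₗ[R] C j) (x : R) : ∀ j, coneC C (j + 1) →ₗ[R] coneC C j
  | 0 => (LinearMap.coprod (d 0) (x • LinearMap.id) : (C 1 × C 0) →ₗ[R] C 0)
  | j + 1 => (LinearMap.prod (LinearMap.coprod (d (j + 1)) (x • LinearMap.id))
      (- (d j ∘ₗ LinearMap.snd R _ _)) : (C (j + 2) × C (j + 1)) →ₗ[R] (C (j + 1) × C j))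

/-- The cone of multiplication by `x`. -/
noncomputable def KRes.cone {R : Type} [CommRing R] {J I I' : Ideal R} {i : ℕ} (K : KRes R J I i)
    (x : R) (hx : x ∈ J) (hreg : ∀ y, x * y ∈ I → y ∈ I)
    (hI' : ∀ y, y ∈ I' ↔ ∃ z, y - x * z ∈ I) : KRes R J I' (i + 1) where
  C := coneC K.C
  d := coneD K.C K.d x
  proj := fun j => match j with
    | 0 => K.proj 0
    | j + 1 => by
      have := K.proj (j + 1)
      have := K.proj j
      exact inferInstanceAs (Module.Projective R (K.C (j + 1) × K.C j))
  dd := fun j => match j with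
    | 0 => by
      rintro ⟨a, b⟩
      change K.d 0 (K.d 1 a + x • b) + x • (- K.d 0 b) = 0
      simp [K.dd]
    | j + 1 => by
      rintro ⟨a, b⟩
      change ((K.d (j + 1) (K.d (j + 2) a + x • b) + x • (- K.d (j + 1) b),
        - K.d j (- K.d (j + 1) b)) : K.C (j + 1) × K.C j) = 0
      simp [K.dd]
  ex := fun j => match j with
    | 0 => by
      rintro ⟨a, b⟩ (h : K.d 0 a + x • b = 0)
      have hb : K.ε b ∈ I := by
        apply hreg
        have h0 : K.ε (K.d 0 a) ∈ I := (K.ex0 _).2 ⟨_, rfl⟩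
        have h1 : K.ε (K.d 0 a) + x * K.ε b = 0 := by
          rw [← smul_eq_mul, ← map_smul, ← map_add, h, map_zero]
        rw [eq_neg_of_add_eq_zero_right h1]
        exact I.neg_mem h0
      obtain ⟨c, rfl⟩ := (K.ex0 _).1 hb
      obtain ⟨e, he⟩ := K.ex 0 (a + x • c) (by rw [map_add, map_smul, h])
      refine ⟨(e, -c), ?_⟩
      change ((K.d 1 e + x • (-c), - K.d 0 (-c)) : K.C 1 × K.C 0) = (a, K.d 0 c)
      rw [he]; simp
    | j + 1 => by
      rintro ⟨a, b⟩ h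
      replace h : ((K.d (j + 1) a + x • b, - K.d j b) : K.C (j + 1) × K.C j) = 0 := h
      rw [Prod.mk_eq_zero] at h
      obtain ⟨h, hb⟩ := h
      obtain ⟨c, rfl⟩ := K.ex j b (neg_eq_zero.1 hb)
      obtain ⟨e, he⟩ := K.ex (j + 1) (a + x • c) (by rw [map_add, map_smul, h])
      refine ⟨(e, -c), ?_⟩
      change ((K.d (j + 2) e + x • (-c), - K.d (j + 1) (-c)) : K.C (j + 2) × K.C (j + 1))
        = (a, K.d (j + 1) c)
      rw [he]; simp
  ε := K.ε
  εsurj := K.εsurj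
  ex0 := fun (a : K.C 0) => by
    refine (hI' (K.ε a)).trans ?_
    constructor
    · rintro ⟨z, hz⟩
      obtain ⟨b, rfl⟩ := K.εsurj z
      have : K.ε (a - x • b) ∈ I := by simpa using hz
      obtain ⟨c, hc⟩ := (K.ex0 _).1 this
      refine ⟨(c, b), ?_⟩
      change K.d 0 c + x • b = a
      rw [hc]; exact sub_add_cancel _ _
    · rintro ⟨⟨c, b⟩, h⟩
      replace h : K.d 0 c + x • b = a := h
      refine ⟨K.ε b, ?_⟩
      have : K.ε a - x * K.ε b = K.ε (K.d 0 c) := by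
        rw [← h]; exact (by simp)
      exact this ▸ (K.ex0 _).2 ⟨_, rfl⟩
  van := fun j hj => match j, hj with
    | j + 1, hj => by
      have := K.van (j + 1) (by omega)
      have := K.van j (by omega)
      exact inferInstanceAs (Subsingleton (K.C (j + 1) × K.C j))
  top := by
    have := K.van (i + 1) (by omega)
    let _ : Unique (K.C (i + 1)) := ⟨⟨0⟩, fun _ => Subsingleton.elim _ _⟩
    exact (LinearEquiv.uniqueProd : (K.C (i + 1) × K.C i) ≃ₗ[R] K.C i).trans K.top
  minim := fun j => match j with
    | 0 => by
      rintro ⟨a, b⟩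
      exact Submodule.add_mem _ (K.minim 0 a)
        (Submodule.smul_mem_smul hx (Submodule.mem_top (x := b)))
    | j + 1 => by
      rintro ⟨a, b⟩
      exact KRes.smulTop_prod J (Submodule.add_mem _ (K.minim (j + 1) a)
        (Submodule.smul_mem_smul hx (Submodule.mem_top (x := b))))
        (Submodule.neg_mem _ (K.minim j b))

/-- The Koszul complex for the first `t` variables. -/
lemma KRes.exists_koszul (k : Type) [Field k] (N : ℕ) : ∀ t ≤ N,
    Nonempty (KRes (MvPolynomial (Fin N) k)
      (Ideal.span (Set.range (MvPolynomial.X : Fin N → MvPolynomial (Fin N) k)))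
      (Ideal.span ((MvPolynomial.X : Fin N → MvPolynomial (Fin N) k) '' {i | (i : ℕ) < t})) t) := by
  intro t
  induction t with
  | zero =>
    intro _
    have : ((MvPolynomial.X : Fin N → MvPolynomial (Fin N) k) '' {i | (i : ℕ) < 0}) = ∅ := by simp
    rw [this, Ideal.span_empty]
    exact ⟨KRes.base _ _⟩
  | succ t ih =>
    intro ht
    obtain ⟨K⟩ := ih (by omega)
    refine ⟨K.cone (MvPolynomial.X ⟨t, ht⟩) (Ideal.subset_span ⟨_, rfl⟩) ?_ ?_⟩
    · intro y hy
      rw [mem_ideal_span_X_image] at hy ⊢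
      intro m hm
      obtain ⟨i, hi, h⟩ := hy (Finsupp.single ⟨t, ht⟩ 1 + m) (by
        rw [mem_support_iff, coeff_X_mul]; exact mem_support_iff.1 hm)
      refine ⟨i, hi, ?_⟩
      have hne : (⟨t, ht⟩ : Fin N) ≠ i := by
        rintro rfl; simp at hi
      simpa [Finsupp.single_apply, hne] using h
    · intro y
      have : {i : Fin N | (i : ℕ) < t + 1} = insert ⟨t, ht⟩ {i : Fin N | (i : ℕ) < t} := by
        ext i; simp [Fin.ext_iff]; omega
      rw [this, Set.image_insert_eq, Ideal.mem_span_insert]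
      constructor
      · rintro ⟨a, z, hz, rfl⟩
        exact ⟨a, by rwa [mul_comm, add_sub_cancel_left]⟩
      · rintro ⟨z, hz⟩
        exact ⟨z, _, hz, by ring⟩

namespace KRes

variable {R : Type} [CommRing R] {J I : Ideal R} {i : ℕ} (K : KRes R J I i)

/-- The chain complex. -/
noncomputable def cplx : ChainComplex (ModuleCat.{0} R) ℕ :=
  ChainComplex.of K.C (fun j => ModuleCat.ofHom (K.d j))
    (fun j => by ext x; exact K.dd j x)

lemma cplx_d (j : ℕ) : K.cplx.d (j + 1) j = ModuleCat.ofHom (K.d j) :=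
  ChainComplex.of_d K.C (fun j => ModuleCat.ofHom (K.d j)) j

/-- The augmentation. -/
noncomputable def aug : K.cplx.X 0 ⟶ ModuleCat.of R (R ⧸ I) :=
  ModuleCat.ofHom ((Submodule.mkQ I) ∘ₗ K.ε)

lemma aug_apply (x : K.C 0) : K.aug.hom x = Submodule.Quotient.mk (K.ε x) := rfl

lemma d_aug : K.cplx.d 1 0 ≫ K.aug = 0 := by
  rw [K.cplx_d 0]
  ext x
  exact (Submodule.Quotient.mk_eq_zero I).2 ((K.ex0 _).2 ⟨x, rfl⟩)

lemma exactAt (j : ℕ) : K.cplx.ExactAt (j + 1) := by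
  rw [HomologicalComplex.exactAt_iff' _ (j + 1 + 1) (j + 1) j (by simp) (by simp),
    ShortComplex.moduleCat_exact_iff]
  intro x hx
  change (K.cplx.d (j + 1) j).hom x = 0 at hx
  change ∃ y, (K.cplx.d (j + 1 + 1) (j + 1)).hom y = x
  rw [cplx_d] at hx ⊢
  exact K.ex j x hx

/-- The projective resolution. -/
noncomputable def res : ProjectiveResolution (ModuleCat.of R (R ⧸ I)) where
  complex := K.cplx
  projective := fun j => by
    have := K.proj j
    exact (IsProjective.iff_projective (R := R) (K.C j)).1 this
  π := (ChainComplex.toSingle₀Equiv _ _).symm ⟨K.aug, K.d_aug⟩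
  quasiIso := ⟨fun j => by
    cases j
    · have hπ : ((ChainComplex.toSingle₀Equiv K.cplx (ModuleCat.of R (R ⧸ I))).symm
          ⟨K.aug, K.d_aug⟩).f 0 = K.aug :=
        ChainComplex.toSingle₀Equiv_symm_apply_f_zero K.aug K.d_aug
      rw [ChainComplex.quasiIsoAt₀_iff]
      refine (ShortComplex.quasiIso_iff_of_zeros' _ rfl rfl rfl).2 ⟨?_, ?_⟩
      · rw [ShortComplex.moduleCat_exact_iff]
        intro x hx
        change (((ChainComplex.toSingle₀Equiv K.cplx (ModuleCat.of R (R ⧸ I))).symm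
          ⟨K.aug, K.d_aug⟩).f 0).hom x = 0 at hx
        change ∃ y, (K.cplx.d 1 0).hom y = x
        rw [hπ] at hx
        rw [K.cplx_d 0]
        exact (K.ex0 x).1 ((Submodule.Quotient.mk_eq_zero I).1 hx)
      · change Epi (((ChainComplex.toSingle₀Equiv K.cplx (ModuleCat.of R (R ⧸ I))).symm
          ⟨K.aug, K.d_aug⟩).f 0)
        rw [hπ]
        exact (ModuleCat.epi_iff_surjective K.aug).2
          ((Submodule.mkQ_surjective I).comp K.εsurj)
    · rw [quasiIsoAt_iff_exactAt']
      · apply K.exactAt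
      · apply ChainComplex.exactAt_succ_single_obj⟩

end KRes

open MonoidalCategory TensorProduct in
lemma tor_top {R : Type} [CommRing R] {J I : Ideal R} {n : ℕ} (K : KRes R J I (n + 1))
    (A : ModuleCat.{0} R) :
    ∃ ψ : (((Tor (ModuleCat R) (n + 1)).obj A).obj (ModuleCat.of R (R ⧸ I))) →ₗ[R] A,
      Function.Injective ψ ∧ ∀ a : A, (∀ r ∈ J, r • a = 0) → ∃ w, ψ w = a := by
  let F := (tensoringLeft (ModuleCat.{0} R)).obj A
  let L := (F.mapHomologicalComplex (ComplexShape.down ℕ)).obj K.cplx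
  let e1 : (((Tor (ModuleCat R) (n + 1)).obj A).obj (ModuleCat.of R (R ⧸ I))) ≅
      L.homology (n + 1) := K.res.isoLeftDerivedObj F (n + 1)
  have hz : L.d (n + 2) (n + 1) = 0 := by
    have : K.cplx.d (n + 2) (n + 1) = 0 := by
      ext x
      have := K.van (n + 2) (by omega)
      have : x = 0 := Subsingleton.elim (α := K.C (n + 2)) _ _
      rw [this]; simp
    change F.map (K.cplx.d (n + 2) (n + 1)) = 0
    rw [this, F.map_zero]
  let e2 : L.cycles (n + 1) ≅ L.homology (n + 1) := L.isoHomologyπ (n + 2) (n + 1) (by simp) hz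
  let g : (((Tor (ModuleCat R) (n + 1)).obj A).obj (ModuleCat.of R (R ⧸ I))) ⟶ L.X (n + 1) :=
    e1.hom ≫ e2.inv ≫ L.iCycles (n + 1)
  have hg : Function.Injective g := by
    rw [← ModuleCat.mono_iff_injective]
    infer_instance
  let e3 : TensorProduct R A (K.C (n + 1)) ≃ₗ[R] A :=
    (TensorProduct.congr (LinearEquiv.refl R A) K.top).trans (TensorProduct.rid R A)
  refine ⟨e3.toLinearMap ∘ₗ g.hom, ?_, ?_⟩
  · exact e3.injective.comp hg
  · intro a ha
    have hker : (L.d (n + 1) n).hom (e3.symm a) = 0 := by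
      change (A ◁ (K.cplx.d (n + 1) n)).hom (e3.symm a) = 0
      rw [K.cplx_d n]
      have h1 : e3.symm a = a ⊗ₜ[R] (K.top.symm 1) := by
        rw [LinearEquiv.symm_apply_eq]
        simp [e3]
      rw [h1]
      change a ⊗ₜ[R] (K.d n (K.top.symm 1)) = 0
      have h2 : ∀ c ∈ J • (⊤ : Submodule R (K.C n)), a ⊗ₜ[R] c = 0 := by
        intro c hc
        refine Submodule.smul_induction_on hc ?_ ?_
        · intro r hr c _
          rw [TensorProduct.tmul_smul, TensorProduct.smul_tmul', ha r hr, TensorProduct.zero_tmul]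
        · intro x y hx hy
          rw [TensorProduct.tmul_add, hx, hy, add_zero]
      exact h2 _ (K.minim n _)
    let f : ModuleCat.of R R ⟶ L.X (n + 1) :=
      ModuleCat.ofHom (LinearMap.toSpanSingleton R (L.X (n + 1)) (e3.symm a))
    have hf : f ≫ L.d (n + 1) n = 0 := by
      ext
      change (L.d (n + 1) n).hom ((1 : R) • (e3.symm a)) = 0
      rw [one_smul]
      exact hker
    let w := L.liftCycles f n (by simp) hf
    refine ⟨(w ≫ e2.hom ≫ e1.inv).hom (1 : R), ?_⟩
    have hw : (w ≫ e2.hom ≫ e1.inv) ≫ g = f := by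
      simp [g, w]
    change e3 (((w ≫ e2.hom ≫ e1.inv) ≫ g).hom (1 : R)) = a
    rw [hw]
    change e3 ((1 : R) • (e3.symm a)) = a
    rw [one_smul, LinearEquiv.apply_symm_apply]

lemma finrank_ge_two {k S : Type} [Field k] [CommRing S] [Algebra k S] (W : ModuleCat.{0} S)
    (A : Type) [AddCommGroup A] [Module S A] [Module k A] [IsScalarTower k S A]
    [Module.Finite k A] (ψ : W →ₗ[S] A) (hψ : Function.Injective ψ) (w₁ w₂ : W)
    (h : LinearIndependent k ![ψ w₁, ψ w₂]) :
    2 ≤ Module.finrank k ((ModuleCat.restrictScalars (algebraMap k S)).obj W) := by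
  let ψ' : ((ModuleCat.restrictScalars (algebraMap k S)).obj W) →ₗ[k] A :=
    { toFun := fun w => ψ w
      map_add' := fun x y => ψ.map_add x y
      map_smul' := fun c x => by
        exact (ψ.map_smul (algebraMap k S c) x).trans (algebraMap_smul S c (ψ x)) }
  have hfin : Module.Finite k ((ModuleCat.restrictScalars (algebraMap k S)).obj W) :=
    Module.Finite.of_injective ψ' hψ
  have hli : LinearIndependent k
      (![w₁, w₂] : Fin 2 → ((ModuleCat.restrictScalars (algebraMap k S)).obj W)) := by
    apply LinearIndependent.of_comp ψ'
    convert h using 1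
    ext i
    fin_cases i <;> rfl
  simpa using hli.fintype_card_le_finrank

lemma mem_monIdeal {k : Type} [Field k] {N : ℕ} (A : Set (Fin N → ℕ))
    (p : MvPolynomial (Fin N) k) :
    p ∈ monIdeal k A ↔ ∀ m ∈ p.support, ∃ a ∈ A, a ≤ m := by
  have : expMon k '' A = (fun s => monomial s (1 : k)) ''
      ((fun a : Fin N → ℕ => Finsupp.equivFunOnFinite.symm a) '' A) := by
    rw [Set.image_image]; rfl
  rw [monIdeal, this, mem_ideal_span_monomial_image]
  refine forall₂_congr fun m _ => ?_
  simp only [Set.mem_image, exists_exists_and_eq_and]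
  rfl

/-- Standard exponents. -/
def stdExp {N : ℕ} (A : Set (Fin N → ℕ)) : Set (Fin N → ℕ) := {m | ∀ a ∈ A, ¬ a ≤ m}

lemma finite_quot {k : Type} [Field k] {N : ℕ} (A : Set (Fin N → ℕ)) (hA : (stdExp A).Finite) :
    Module.Finite k (MvPolynomial (Fin N) k ⧸ monIdeal k A) := by
  rw [Module.finite_def]
  have hfin := hA.image (fun a => Ideal.Quotient.mk (monIdeal k A) (expMon k a))
  refine ⟨hfin.toFinset, ?_⟩
  rw [Set.Finite.coe_toFinset, eq_top_iff]
  rintro x -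
  obtain ⟨p, rfl⟩ := Ideal.Quotient.mk_surjective x
  induction p using MvPolynomial.induction_on' with
  | add p q hp hq => rw [map_add]; exact Submodule.add_mem _ hp hq
  | monomial m c =>
    have h1 : (monomial m c : MvPolynomial (Fin N) k) = c • expMon k (m : Fin N → ℕ) := by
      simp [expMon, smul_monomial]
    have h2 : Ideal.Quotient.mk (monIdeal k A) (monomial m c) =
        c • Ideal.Quotient.mk (monIdeal k A) (expMon k (m : Fin N → ℕ)) := by
      rw [h1]; rfl
    rw [h2]
    apply Submodule.smul_mem
    by_cases hm : (m : Fin N → ℕ) ∈ stdExp A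
    · exact Submodule.subset_span ⟨_, hm, rfl⟩
    · have : Ideal.Quotient.mk (monIdeal k A) (expMon k (m : Fin N → ℕ)) = 0 := by
        rw [Ideal.Quotient.eq_zero_iff_mem, mem_monIdeal]
        intro m' hm'
        simp only [stdExp, Set.mem_ofPred_eq, not_forall, not_not] at hm
        obtain ⟨a, ha, h⟩ := hm
        have := support_monomial_subset hm'
        simp at this
        subst this
        exact ⟨a, ha, h⟩
      rw [this]; exact Submodule.zero_mem _

lemma socle_of_maximal {k : Type} [Field k] {N : ℕ} (A : Set (Fin N → ℕ)) (m : Fin N → ℕ)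
    (hm : Maximal (· ∈ stdExp A) m) :
    ∀ r ∈ Ideal.span (Set.range (X : Fin N → MvPolynomial (Fin N) k)),
      r • (Ideal.Quotient.mk (monIdeal k A) (expMon k m)) = 0 := by
  intro r hr
  have key : Ideal.span (Set.range (MvPolynomial.X : Fin N → MvPolynomial (Fin N) k)) ≤
      Ideal.torsionOf _ _ (Ideal.Quotient.mk (monIdeal k A) (expMon k m)) := by
    rw [Ideal.span_le]
    rintro _ ⟨i, rfl⟩
    rw [SetLike.mem_coe, Ideal.mem_torsionOf_iff]
    change Ideal.Quotient.mk (monIdeal k A) (MvPolynomial.X i * expMon k m) = 0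
    rw [Ideal.Quotient.eq_zero_iff_mem, mem_monIdeal]
    intro m' hm'
    have h1 : (MvPolynomial.X i * expMon k m : MvPolynomial (Fin N) k) =
        monomial (Finsupp.single i 1 + Finsupp.equivFunOnFinite.symm m) 1 := by
      simp [expMon, MvPolynomial.X, monomial_mul]
    rw [h1] at hm'
    have := support_monomial_subset hm'
    simp only [Finset.mem_singleton] at this
    subst this
    by_contra hcon
    push Not at hcon
    have hle := hm.2 (y := ⇑(Finsupp.single i 1 + Finsupp.equivFunOnFinite.symm m : Fin N →₀ ℕ)) hcon
      (by intro j; simp)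
    have := hle i
    simp at this
  exact (Ideal.mem_torsionOf_iff _ _).1 (key hr)

lemma linInd_pair {k : Type} [Field k] {N : ℕ} (A : Set (Fin N → ℕ)) (m₁ m₂ : Fin N → ℕ)
    (h₁ : m₁ ∈ stdExp A) (h₂ : m₂ ∈ stdExp A) (hne : m₁ ≠ m₂) :
    LinearIndependent k ![Ideal.Quotient.mk (monIdeal k A) (expMon k m₁),
      Ideal.Quotient.mk (monIdeal k A) (expMon k m₂)] := by
  rw [LinearIndependent.pair_iff]
  intro s t h
  have h' : s • expMon k m₁ + t • expMon k m₂ ∈ monIdeal k A := by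
    rw [← Ideal.Quotient.eq_zero_iff_mem]; exact h
  rw [mem_monIdeal] at h'
  have hne' : Finsupp.equivFunOnFinite.symm m₁ ≠ Finsupp.equivFunOnFinite.symm m₂ :=
    fun h => hne (Finsupp.equivFunOnFinite.symm.injective h)
  constructor
  · by_contra hs
    obtain ⟨a, ha, hle⟩ := h' (Finsupp.equivFunOnFinite.symm m₁) (by
      rw [mem_support_iff]; simp [expMon, coeff_monomial, hne'.symm, hs])
    exact h₁ a ha hle
  · by_contra hs
    obtain ⟨a, ha, hle⟩ := h' (Finsupp.equivFunOnFinite.symm m₂) (by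
      rw [mem_support_iff]; simp [expMon, coeff_monomial, hne', hs])
    exact h₂ a ha hle

lemma exists_two_maximal (n q : ℕ) (hq : 1 ≤ q)
    (α : Fin (n + 1) → ℕ) (hα : ∀ i, 0 < α i)
    (l : Fin q → (Fin (n + 1) → ℕ)) (hl : ∀ j, 0 < l j (Fin.last n))
    (G : Finset (Fin (n + 1) → ℕ))
    (hG : G = (Finset.univ.image fun i : Fin (n + 1) => Pi.single i (α i)) ∪
        Finset.univ.image l)
    (hcardG : G.card = (n + 1) + q)
    (hmin : ∀ a ∈ G, ∀ b ∈ G, a ≠ b → ¬a ≤ b) :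
    (stdExp (G : Set (Fin (n + 1) → ℕ))).Finite ∧ ∃ m₁ m₂, m₁ ≠ m₂ ∧
      Maximal (· ∈ stdExp (G : Set (Fin (n + 1) → ℕ))) m₁ ∧
      Maximal (· ∈ stdExp (G : Set (Fin (n + 1) → ℕ))) m₂ := by
  have hpow : ∀ i, (Pi.single i (α i) : Fin (n + 1) → ℕ) ∈ G := fun i => by
    rw [hG]; exact Finset.mem_union_left _ (Finset.mem_image_of_mem _ (Finset.mem_univ i))
  have hfin : (stdExp (G : Set (Fin (n + 1) → ℕ))).Finite := by
    refine (Set.finite_Iic α).subset fun m hm i => ?_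
    by_contra hlt
    refine hm _ (hpow i) fun j => ?_
    by_cases hj : j = i
    · subst hj; simp; exact (not_le.1 hlt).le
    · simp [hj]
  refine ⟨hfin, ?_⟩
  set j₀ : Fin q := ⟨0, hq⟩
  have hl0 : l j₀ ∈ G := by
    rw [hG]; exact Finset.mem_union_right _ (Finset.mem_image_of_mem _ (Finset.mem_univ _))
  have hdist : ∀ i, l j₀ ≠ Pi.single i (α i) := by
    intro i hi
    have hsub : G ⊆ (Finset.univ.image fun i : Fin (n + 1) => (Pi.single i (α i) : Fin (n + 1) → ℕ))
        ∪ (Finset.univ.erase j₀).image l := by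
      intro a ha
      rw [hG, Finset.mem_union] at ha
      rw [Finset.mem_union]
      rcases ha with ha | ha
      · exact Or.inl ha
      · obtain ⟨j, -, rfl⟩ := Finset.mem_image.1 ha
        by_cases hj : j = j₀
        · subst hj; left; rw [hi]; exact Finset.mem_image_of_mem _ (Finset.mem_univ i)
        · right; exact Finset.mem_image_of_mem _ (Finset.mem_erase.2 ⟨hj, Finset.mem_univ _⟩)
    have h1 := Finset.card_le_card hsub
    have h2 := Finset.card_union_le
      (Finset.univ.image fun i : Fin (n + 1) => (Pi.single i (α i) : Fin (n + 1) → ℕ))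
      ((Finset.univ.erase j₀).image l)
    have h3 := Finset.card_image_le (s := Finset.univ)
      (f := fun i : Fin (n + 1) => (Pi.single i (α i) : Fin (n + 1) → ℕ))
    have h4 := Finset.card_image_le (s := Finset.univ.erase j₀) (f := l)
    rw [Finset.card_erase_of_mem (Finset.mem_univ _)] at h4
    simp only [Finset.card_univ, Fintype.card_fin] at h3 h4
    omega
  have hex : ∃ j, j ≠ Fin.last n ∧ 0 < l j₀ j := by
    by_contra! hcon
    have hlt : ¬ (Pi.single (Fin.last n) (α (Fin.last n)) : Fin (n + 1) → ℕ) ≤ l j₀ :=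
      hmin _ (hpow _) _ hl0 (hdist _).symm
    refine hmin _ hl0 _ (hpow (Fin.last n)) (hdist _) fun j => ?_
    by_cases hj : j = Fin.last n
    · subst hj
      by_contra hlt'
      apply hlt
      intro i
      by_cases hi : i = Fin.last n
      · subst hi; simp at hlt' ⊢; exact hlt'.le
      · simp [hi]
    · exact (hcon j hj).trans (Nat.zero_le _)
  obtain ⟨j, hj, hjpos⟩ := hex
  have hstd : ∀ i, 0 < l j₀ i → Function.update (l j₀) i (l j₀ i - 1) ∈
      stdExp (G : Set (Fin (n + 1) → ℕ)) := by
    intro i hi a ha hle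
    have hle' : a ≤ l j₀ := hle.trans (by
      intro t
      by_cases ht : t = i
      · subst ht; simp
      · simp [ht])
    by_cases hal : a = l j₀
    · subst hal
      have := hle i
      simp at this
      omega
    · exact hmin _ ha _ hl0 hal hle'
  obtain ⟨p₁, hp₁, hmax₁⟩ := hfin.exists_le_maximal (hstd _ (hl j₀))
  obtain ⟨p₂, hp₂, hmax₂⟩ := hfin.exists_le_maximal (hstd _ hjpos)
  refine ⟨p₁, p₂, ?_, hmax₁, hmax₂⟩
  rintro rfl
  refine hmax₁.1 _ hl0 fun i => ?_
  by_cases hi : i = Fin.last n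
  · have := hp₂ i
    rwa [Function.update_of_ne (by rw [hi]; exact hj.symm)] at this
  · have := hp₁ i
    rwa [Function.update_of_ne hi] at this


/-- Lemma 6.9: if `M` is minimally generated by exactly
`G = {x_1^{α_1},…,x_n^{α_n}, l_1,…,l_q}` with `q ≥ 1`, all `α_i ≥ 1`, and each `l_j`
divisible by the last variable `x_n`, then `β_n(S/M) ≥ 2`.  (Here the number of variables is
`n + 1` in Lean's indexing, so `x_n` is `X (Fin.last n)`.) -/
theorem bettiN_ge_two_of_pure_powers_and_extra_gens (n q : ℕ) (hq : 1 ≤ q) (k : Type) [Field k]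
    (α : Fin (n + 1) → ℕ) (hα : ∀ i, 0 < α i)
    (l : Fin q → (Fin (n + 1) → ℕ)) (hl : ∀ j, 0 < l j (Fin.last n))
    (G : Finset (Fin (n + 1) → ℕ))
    (hG : G = (Finset.univ.image fun i : Fin (n + 1) => Pi.single i (α i)) ∪
        Finset.univ.image l)
    (hcardG : G.card = (n + 1) + q)
    (M : Ideal (MvPolynomial (Fin (n + 1)) k)) (hgen : M = monIdeal k ↑G)
    (hmin : ∀ a ∈ G, ∀ b ∈ G, a ≠ b → ¬a ≤ b) :
    2 ≤ betti k M (n + 1) := by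
  subst hgen
  obtain ⟨hfin, m₁, m₂, hne, hm₁, hm₂⟩ := exists_two_maximal n q hq α hα l hl G hG hcardG hmin
  have hF : Module.Finite k (MvPolynomial (Fin (n + 1)) k ⧸ monIdeal k (G : Set (Fin (n + 1) → ℕ))) :=
    finite_quot _ hfin
  obtain ⟨K⟩ := KRes.exists_koszul k (n + 1) (n + 1) le_rfl
  have hset : ((MvPolynomial.X : Fin (n + 1) → MvPolynomial (Fin (n + 1)) k) ''
      {i | (i : ℕ) < n + 1}) = Set.range MvPolynomial.X := by
    rw [← Set.image_univ]
    congr 1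
    ext i
    simpa using Nat.lt_succ_iff.1 i.2
  rw [hset] at K
  obtain ⟨ψ, hψ, hs⟩ := tor_top K (ModuleCat.of (MvPolynomial (Fin (n + 1)) k)
    (MvPolynomial (Fin (n + 1)) k ⧸ monIdeal k (G : Set (Fin (n + 1) → ℕ))))
  obtain ⟨w₁, hw₁⟩ := hs _ (socle_of_maximal (k := k) _ m₁ hm₁)
  obtain ⟨w₂, hw₂⟩ := hs _ (socle_of_maximal (k := k) _ m₂ hm₂)
  refine finrank_ge_two _ (MvPolynomial (Fin (n + 1)) k ⧸ monIdeal k (G : Set (Fin (n + 1) → ℕ)))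
    ψ hψ w₁ w₂ ?_
  rw [hw₁, hw₂]
  exact linInd_pair _ m₁ m₂ hm₁.1 hm₂.1 hne
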